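/- In the setting of the characteristic domain 𝒟 for the operator L = t·∂/∂t − λ(t,x) − b(t,x)·∂/∂x (with |b(t,x)| ≤ B·m(t)): assume additionally that 0 < a₀ ≤ Re λ(t,x) on 𝒟. If ψ and ψ' are bounded on D_{R₁}, and g ∈ X₁(𝒟) satisfies max(|g(t,x)|, |(∂g/∂x)(t,x)|) ≤ G·t^μ on 𝒟 for some G > 0 and 0 < μ < a₀, then the unique solution w ∈ X₁(𝒟) of Lw = g with w(T,x) = ψ(x) satisfies a bound max(|w(t,x)|, |(∂w/∂x)(t,x)|) ≤ C·t^μ on 𝒟 for some C > 0; in particular one has |w(t,x)| ≤ M·(t/T)^{a₀} + (G/(a₀−μ))·t^μ on 𝒟 when |ψ| ≤ M on D_{R₁} and |g| ≤ G·t^μ on 𝒟. -/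

import Mathlib

open Set Filter MeasureTheory Metric Topology Complex

noncomputable section

/-- A *weight function* on `(0, T₀]`: increasing, continuous and positive on `(0,T₀]`,
with `∫₀^{T₀} m(τ)/τ dτ < ∞`. -/
def IsWeight (T₀ : ℝ) (m : ℝ → ℝ) : Prop :=
  MonotoneOn m (Set.Ioc 0 T₀) ∧ ContinuousOn m (Set.Ioc 0 T₀) ∧
    (∀ t ∈ Set.Ioc (0 : ℝ) T₀, 0 < m t) ∧
    MeasureTheory.IntegrableOn (fun τ => m τ / τ) (Set.Ioc 0 T₀)

/-- `φ(t) = ∫₀ᵗ m(τ)/τ dτ`. -/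
def wphi (m : ℝ → ℝ) (t : ℝ) : ℝ := ∫ τ in Set.Ioc (0 : ℝ) t, m τ / τ

/-- `f ∈ X₀(S × D_R)` : continuous on `S × D_R`, holomorphic in `x` for each fixed `t`. -/
def MemX0 (S : Set ℝ) (R : ℝ) (f : ℝ → ℂ → ℂ) : Prop :=
  ContinuousOn (fun p : ℝ × ℂ => f p.1 p.2) (S ×ˢ Metric.ball (0 : ℂ) R) ∧
    ∀ t ∈ S, DifferentiableOn ℂ (f t) (Metric.ball (0 : ℂ) R)

/-- `f ∈ X₁(S × D_R)` : `f ∈ X₀`, with a `t`-derivative for `t > 0` such that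
`t ∂f/∂t ∈ X₀`. -/
def MemX1 (S : Set ℝ) (R : ℝ) (f : ℝ → ℂ → ℂ) : Prop :=
  MemX0 S R f ∧
    ∃ g : ℝ → ℂ → ℂ, MemX0 S R g ∧
      ∀ t ∈ S, 0 < t → ∀ x ∈ Metric.ball (0 : ℂ) R,
        HasDerivWithinAt (fun s => f s x) (g t x / (t : ℂ)) S t

/-- `u` solves equation (E) :
`t ∂u/∂t = a + λ u + b ∂u/∂x + Σ_{j+α≥2} a_{j,α} u^j (∂u/∂x)^α` on `(0,T] × D_R`. -/
def SolvesE (T R : ℝ) (a lam b : ℝ → ℂ → ℂ) (c : ℕ → ℕ → ℝ → ℂ → ℂ)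
    (u : ℝ → ℂ → ℂ) : Prop :=
  ∀ t ∈ Set.Ioc (0 : ℝ) T, ∀ x ∈ Metric.ball (0 : ℂ) R,
    HasDerivWithinAt (fun s => u s x)
      ((a t x + lam t x * u t x + b t x * deriv (u t) x +
          ∑' p : ℕ × ℕ, c p.1 p.2 t x * u t x ^ p.1 * deriv (u t) x ^ p.2) / (t : ℂ))
      (Set.Ioc 0 T) t

/-- `u` is a germ (near the origin) solution of equation (E). -/
def GermSol (T₀ R₀ : ℝ) (a lam b : ℝ → ℂ → ℂ) (c : ℕ → ℕ → ℝ → ℂ → ℂ)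
    (u : ℝ → ℂ → ℂ) : Prop :=
  ∃ T, 0 < T ∧ T ≤ T₀ ∧ ∃ R, 0 < R ∧ R ≤ R₀ ∧ SolvesE T R a lam b c u

/-- the germ class `X₁^d`. -/
def MemX1d (d : ℝ) (u : ℝ → ℂ → ℂ) : Prop :=
  ∃ T > (0 : ℝ), ∃ R > (0 : ℝ), MemX1 (Set.Icc 0 T) R u ∧
    ∃ C > (0 : ℝ), ∀ t ∈ Set.Icc (0 : ℝ) T, ∀ x ∈ Metric.ball (0 : ℂ) R,
      max ‖u t x‖ ‖deriv (u t) x‖ ≤ C * t ^ d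

/-- the germ class `X₁⁺ = ⋃_{d>0} X₁^d`. -/
def MemX1plus (u : ℝ → ℂ → ℂ) : Prop := ∃ d > (0 : ℝ), MemX1d d u

/-- the germ class `X₁^{(μ)} = ⋂_{0<a<μ} X₁^a`. -/
def MemX1lt (μ : ℝ) (u : ℝ → ℂ → ℂ) : Prop := ∀ a : ℝ, 0 < a → a < μ → MemX1d a u

/-- two functions agree as germs on some `(0,ε] × D_δ`. -/
def GermEqPos (u v : ℝ → ℂ → ℂ) : Prop :=
  ∃ ε > (0 : ℝ), ∃ δ > (0 : ℝ), ∀ t ∈ Set.Ioc (0 : ℝ) ε, ∀ x ∈ Metric.ball (0 : ℂ) δ,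
    u t x = v t x

/-- the class `𝒳₁` (built on `X₁([0,T]×D_R)`) : the limsup-condition
`limsup_{ρ→0⁺} [ lim_{σ→0⁺} (1/ρ²) sup_{(0,σ)×D_ρ} |u| ] = 0`. -/
def MemXscrIcc (u : ℝ → ℂ → ℂ) : Prop :=
  (∃ T > (0 : ℝ), ∃ R > (0 : ℝ), MemX1 (Set.Icc 0 T) R u) ∧
    ∀ ε > (0 : ℝ), ∃ ρ₁ > (0 : ℝ), ∀ ρ, 0 < ρ → ρ < ρ₁ →
      ∃ σ > (0 : ℝ), ∀ t, 0 < t → t < σ → ∀ x ∈ Metric.ball (0 : ℂ) ρ,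
        ‖u t x‖ ≤ ε * ρ ^ 2

/-- the class `𝒳₁` (built on `X₁((0,T]×D_R)`). -/
def MemXscrIoc (u : ℝ → ℂ → ℂ) : Prop :=
  (∃ T > (0 : ℝ), ∃ R > (0 : ℝ), MemX1 (Set.Ioc 0 T) R u) ∧
    ∀ ε > (0 : ℝ), ∃ ρ₁ > (0 : ℝ), ∀ ρ, 0 < ρ → ρ < ρ₁ →
      ∃ σ > (0 : ℝ), ∀ t, 0 < t → t < σ → ∀ x ∈ Metric.ball (0 : ℂ) ρ,
        ‖u t x‖ ≤ ε * ρ ^ 2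

/-- `ψ` is holomorphic in a neighborhood of `x = 0`. -/
def HoloGerm (ψ : ℂ → ℂ) : Prop :=
  ∃ r > (0 : ℝ), DifferentiableOn ℂ ψ (Metric.ball (0 : ℂ) r)

/-- `t^{-λ(0,x)} w(t,x) → ψ(x)` as `t → 0⁺`, uniformly near `x = 0`,
where `t^{-λ(0,x)} = exp(-λ(0,x) log t)`. -/
def BndLimit (lam0 : ℂ → ℂ) (w : ℝ → ℂ → ℂ) (ψ : ℂ → ℂ) : Prop :=
  ∃ δ > (0 : ℝ), TendstoUniformlyOn
    (fun t x => Complex.exp (-(lam0 x) * (Real.log t : ℂ)) * w t x) ψ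
    (nhdsWithin 0 (Set.Ioi 0)) (Metric.ball (0 : ℂ) δ)

/-- `lim_{t→0⁺} sup_{x ∈ D_R} |t^{-d} u(t,x)| = 0`. -/
def SmalloOnBall (d R : ℝ) (u : ℝ → ℂ → ℂ) : Prop :=
  ∀ ε > (0 : ℝ), ∃ τ > (0 : ℝ), ∀ t, 0 < t → t < τ → ∀ x ∈ Metric.ball (0 : ℂ) R,
    ‖u t x‖ ≤ ε * t ^ d

/-- `f ∈ X₀(W)` for a general domain `W ⊆ ℝ × ℂ`. -/
def MemX0W (W : Set (ℝ × ℂ)) (f : ℝ → ℂ → ℂ) : Prop :=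
  ContinuousOn (fun p : ℝ × ℂ => f p.1 p.2) W ∧
    ∀ t : ℝ, DifferentiableOn ℂ (f t) {y : ℂ | (t, y) ∈ W}

/-- `f ∈ X₁(W)` for a general domain `W ⊆ ℝ × ℂ`. -/
def MemX1W (W : Set (ℝ × ℂ)) (f : ℝ → ℂ → ℂ) : Prop :=
  MemX0W W f ∧
    ∃ g : ℝ → ℂ → ℂ, MemX0W W g ∧
      ∀ t x, (t, x) ∈ W → 0 < t →
        HasDerivWithinAt (fun s => f s x) (g t x / (t : ℂ)) {s : ℝ | (s, x) ∈ W} t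

/-- `w` solves `t ∂w/∂t = λ w + b ∂w/∂x + g` on the domain `W`. -/
def SolvesLW (W : Set (ℝ × ℂ)) (lam b g w : ℝ → ℂ → ℂ) : Prop :=
  ∀ t x, (t, x) ∈ W → 0 < t →
    HasDerivWithinAt (fun s => w s x)
      ((lam t x * w t x + b t x * deriv (w t) x + g t x) / (t : ℂ))
      {s : ℝ | (s, x) ∈ W} t

/-- `v` solves the homogeneous linear equation `t ∂v/∂t = λ v + b ∂v/∂x`
on the product domain `S × D_R`. -/
def SolvesLin (S : Set ℝ) (R : ℝ) (lam b : ℝ → ℂ → ℂ) (v : ℝ → ℂ → ℂ) : Prop :=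
  ∀ t ∈ S, 0 < t → ∀ x ∈ Metric.ball (0 : ℂ) R,
    HasDerivWithinAt (fun s => v s x)
      ((lam t x * v t x + b t x * deriv (v t) x) / (t : ℂ)) S t

/-- the characteristic domain `𝒟 = ⋃_{x₀ ∈ D_{R₁}} {(t, φ(t;T,x₀)) : 0 < t ≤ T}`. -/
def Dchar (T R₁ : ℝ) (Φ : ℝ → ℝ → ℂ → ℂ) : Set (ℝ × ℂ) :=
  {p : ℝ × ℂ | p.1 ∈ Set.Ioc (0 : ℝ) T ∧ ∃ x₀ ∈ Metric.ball (0 : ℂ) R₁, p.2 = Φ p.1 T x₀}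

/-- the domain `W = {(t,x) ∈ [0,T] × D_R : φ(t)/r + |x| < R}`. -/
def Wset (m : ℝ → ℝ) (T R r : ℝ) : Set (ℝ × ℂ) :=
  {p : ℝ × ℂ | p.1 ∈ Set.Icc (0 : ℝ) T ∧ p.2 ∈ Metric.ball (0 : ℂ) R ∧
    wphi m p.1 / r + ‖p.2‖ < R}

/-!
Along a characteristic `s ↦ φ(s; T, x)` the equation `Lw = g` becomes the scalar Fuchsian equation
`s y' = λ y + g`. Its integrating factor `exp (-∫ₜˢ λ/σ dσ)` is bounded by `(t/s)^{a₀}`, so the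
terminal value decays like `t^{a₀}`, while the forcing contributes at most
`G ∫ₜᵀ (t/s)^{a₀} s^{μ-1} ds ≤ G t^μ / (a₀ - μ)`.

For `∂w/∂x`, no equation for the derivative is needed: the equations along two neighbouring
characteristics differ by a forcing of size `O(s^μ |x - x₀|)`, so the same estimate shows that
`x ↦ w(t, φ(t; T, x))` is `O(t^μ)`-Lipschitz. Since `∂ₓb/t = O(m(t)/t)` is integrable up to `t = 0`,
the flow is bi-Lipschitz uniformly in `t`, which turns this into a bound on `∂w/∂x`.
-/

section HolomorphicFamilies

variable {X E : Type*} [TopologicalSpace X] [NormedAddCommGroup E] [NormedSpace ℂ E]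
  {S : Set X} {U : Set ℂ} {f : X → ℂ → E}

lemma continuousOn_deriv_of_continuousOn_prod [CompleteSpace E] (hU : IsOpen U)
    (hf : ContinuousOn (fun p : X × ℂ => f p.1 p.2) (S ×ˢ U))
    (hfd : ∀ s ∈ S, DifferentiableOn ℂ (f s) U) :
    ContinuousOn (fun p : X × ℂ => deriv (f p.1) p.2) (S ×ˢ U) := by
  rintro ⟨s, z⟩ ⟨hs, hz⟩
  have nhds_eq (y : ℂ) (hy : y ∈ U) : 𝓝[S ×ˢ U] (s, y) = 𝓝[S] s ×ˢ 𝓝 y := by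
    rw [nhdsWithin_prod_eq, hU.nhdsWithin_eq hy]
  have hunif : TendstoLocallyUniformlyOn f (f s) (𝓝[S] s) U := by
    rw [hU.tendstoLocallyUniformlyOn_iff_forall_tendsto]
    intro y hy
    have hslice : Tendsto (fun p : X × ℂ => f s p.2) (𝓝[S] s ×ˢ 𝓝 y) (𝓝 (f s y)) :=
      (((hfd s hs).continuousOn.continuousAt (hU.mem_nhds hy)).tendsto).comp tendsto_snd
    have hjoint : Tendsto (fun p : X × ℂ => f p.1 p.2) (𝓝[S] s ×ˢ 𝓝 y) (𝓝 (f s y)) :=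
      nhds_eq y hy ▸ hf (s, y) ⟨hs, hy⟩
    exact (hslice.prodMk_nhds hjoint).mono_right (nhds_le_uniformity _)
  have hderiv := hunif.deriv (eventually_mem_nhdsWithin.mono hfd) hU
  rw [hU.tendstoLocallyUniformlyOn_iff_forall_tendsto] at hderiv
  have hlim : Tendsto (fun p : X × ℂ => deriv (f s) p.2) (𝓝[S] s ×ˢ 𝓝 z) (𝓝 (deriv (f s) z)) :=
    (((hfd s hs).deriv hU).continuousOn.continuousAt (hU.mem_nhds hz)).tendsto.comp tendsto_snd
  rw [ContinuousWithinAt, nhds_eq z hz]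
  exact hlim.congr_uniformity (hderiv z hz)

lemma exists_forall_norm_deriv_le [CompleteSpace E] {K : Set ℂ} (hU : IsOpen U)
    (hf : ContinuousOn (fun p : X × ℂ => f p.1 p.2) (S ×ˢ U))
    (hfd : ∀ s ∈ S, DifferentiableOn ℂ (f s) U) (hS : IsCompact S) (hK : IsCompact K)
    (hKU : K ⊆ U) : ∃ L, ∀ s ∈ S, ∀ z ∈ K, ‖deriv (f s) z‖ ≤ L := by
  obtain ⟨L, hL⟩ := (hS.prod hK).exists_bound_of_continuousOn
    ((continuousOn_deriv_of_continuousOn_prod hU hf hfd).mono (prod_mono_right hKU))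
  exact ⟨L, fun s hs z hz => hL (s, z) ⟨hs, hz⟩⟩

lemma norm_dslope_sub_le_of_norm_deriv_sub_le {f : ℂ → E} {d : E} {C : ℝ} (hU : Convex ℝ U)
    (hf : ∀ z ∈ U, DifferentiableAt ℂ f z) (hC : ∀ z ∈ U, ‖deriv f z - d‖ ≤ C) {y z : ℂ}
    (hy : y ∈ U) (hz : z ∈ U) : ‖dslope f y z - d‖ ≤ C := by
  rcases eq_or_ne z y with rfl | hne
  · simpa using hC z hz
  have hne' : z - y ≠ 0 := sub_ne_zero.2 hne
  have hmean : ‖(f z - z • d) - (f y - y • d)‖ ≤ C * ‖z - y‖ :=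
    hU.norm_image_sub_le_of_norm_hasDerivWithin_le
      (fun x hx => by
        simpa using ((hf x hx).hasDerivAt.sub ((hasDerivAt_id x).smul_const d)).hasDerivWithinAt)
      hC hy hz
  have hscale : (z - y) • (dslope f y z - d) = (f z - z • d) - (f y - y • d) := by
    rw [smul_sub, sub_smul_dslope, sub_smul]
    abel
  rwa [← hscale, norm_smul, mul_comm, mul_le_mul_iff_left₀ (norm_pos_iff.2 hne')] at hmean

lemma norm_dslope_le_of_norm_deriv_le {f : ℂ → E} {C : ℝ} (hU : Convex ℝ U)
    (hf : ∀ z ∈ U, DifferentiableAt ℂ f z) (hC : ∀ z ∈ U, ‖deriv f z‖ ≤ C) {y z : ℂ} (hy : y ∈ U)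
    (hz : z ∈ U) : ‖dslope f y z‖ ≤ C := by
  simpa using norm_dslope_sub_le_of_norm_deriv_sub_le (d := 0) hU hf (by simpa using hC) hy hz

lemma tendsto_dslope_of_continuousOn_prod [CompleteSpace E] (hU : IsOpen U)
    (hf : ContinuousOn (fun p : X × ℂ => f p.1 p.2) (S ×ˢ U))
    (hfd : ∀ s ∈ S, DifferentiableOn ℂ (f s) U) {s : X} {z : ℂ} (hs : s ∈ S) (hz : z ∈ U) :
    Tendsto (fun p : X × ℂ × ℂ => dslope (f p.1) p.2.1 p.2.2) (𝓝[S] s ×ˢ 𝓝 z ×ˢ 𝓝 z)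
      (𝓝 (deriv (f s) z)) := by
  have hderiv := continuousOn_deriv_of_continuousOn_prod hU hf hfd (s, z) ⟨hs, hz⟩
  rw [ContinuousWithinAt, nhdsWithin_prod_eq, hU.nhdsWithin_eq hz, Metric.tendsto_nhds] at hderiv
  rw [Metric.tendsto_nhds]
  intro ε hε
  obtain ⟨N, hN, W, hW, hNW⟩ := eventually_prod_iff.1 (hderiv (ε / 2) (half_pos hε))
  obtain ⟨δ, hδ, hball⟩ := Metric.mem_nhds_iff.1 (inter_mem hW (hU.mem_nhds hz))
  filter_upwards [prod_mem_prod (inter_mem hN self_mem_nhdsWithin)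
    (prod_mem_prod (ball_mem_nhds z hδ) (ball_mem_nhds z hδ))]
  rintro ⟨t, x, y⟩ ⟨⟨hNt, ht⟩, hx, hy⟩
  have hle : ‖dslope (f t) x y - deriv (f s) z‖ ≤ ε / 2 :=
    norm_dslope_sub_le_of_norm_deriv_sub_le (convex_ball z δ)
      (fun u hu => (hfd t ht).differentiableAt (hU.mem_nhds (hball hu).2))
      (fun u hu => (dist_eq_norm (deriv (f t) u) _ ▸ hNW hNt (hball hu).1).le) hx hy
  rw [dist_eq_norm]
  linarith

lemma continuousOn_dslope_of_continuousOn_prod [CompleteSpace E] (hU : IsOpen U)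
    (hf : ContinuousOn (fun p : X × ℂ => f p.1 p.2) (S ×ˢ U))
    (hfd : ∀ s ∈ S, DifferentiableOn ℂ (f s) U) :
    ContinuousOn (fun p : X × ℂ × ℂ => dslope (f p.1) p.2.1 p.2.2) (S ×ˢ U ×ˢ U) := by
  rintro ⟨s, y, z⟩ ⟨hs, hy, hz⟩
  rcases eq_or_ne z y with rfl | hne
  · rw [ContinuousWithinAt, nhdsWithin_prod_eq, nhdsWithin_prod_eq, hU.nhdsWithin_eq hz,
      dslope_same]
    exact tendsto_dslope_of_continuousOn_prod hU hf hfd hs hz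
  have hcomp (g : ℂ × ℂ → ℂ) (hg : Continuous g) (hgU : MapsTo g (U ×ˢ U) U) :
      ContinuousOn (fun p : X × ℂ × ℂ => f p.1 (g p.2)) (S ×ˢ U ×ˢ U) :=
    hf.comp (f := fun p : X × ℂ × ℂ => (p.1, g p.2)) (by fun_prop) fun p hp => ⟨hp.1, hgU hp.2⟩
  have hslope : ContinuousWithinAt (fun p : X × ℂ × ℂ =>
      (p.2.2 - p.2.1)⁻¹ • (f p.1 p.2.2 - f p.1 p.2.1)) (S ×ˢ U ×ˢ U) (s, y, z) := by
    refine ContinuousWithinAt.smul (ContinuousWithinAt.inv₀ (by fun_prop) (sub_ne_zero.2 hne)) ?_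
    exact (hcomp Prod.snd continuous_snd (fun _ h => h.2) _ ⟨hs, hy, hz⟩).sub
      (hcomp Prod.fst continuous_fst (fun _ h => h.1) _ ⟨hs, hy, hz⟩)
  have hoffdiag : ∀ᶠ p : X × ℂ × ℂ in 𝓝 (s, y, z), p.2.2 ≠ p.2.1 :=
    (isOpen_ne_fun (by fun_prop) (by fun_prop)).mem_nhds hne
  refine hslope.congr_of_eventuallyEq ?_ (by simp [dslope_of_ne _ hne, slope_def_module])
  filter_upwards [mem_nhdsWithin_of_mem_nhds hoffdiag] with p hp
  rw [dslope_of_ne _ hp, slope_def_module]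

lemma hasDerivWithinAt_comp_curve [CompleteSpace E] {f : ℝ → ℂ → E} {c : ℝ → ℂ} {S : Set ℝ}
    {s : ℝ} {f' : E} {c' : ℂ} (hU : IsOpen U)
    (hf : ContinuousOn (fun p : ℝ × ℂ => f p.1 p.2) (S ×ˢ U))
    (hfd : ∀ s ∈ S, DifferentiableOn ℂ (f s) U) (hs : s ∈ S) (hcs : c s ∈ U)
    (hf' : HasDerivWithinAt (fun t => f t (c s)) f' S s) (hc : HasDerivWithinAt c c' S s) :
    HasDerivWithinAt (fun t => f t (c t)) (f' + c' • deriv (f s) (c s)) S s := by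
  have hpair : Tendsto (fun t => (t, c s, c t)) (𝓝[S] s) (𝓝[S] s ×ˢ 𝓝 (c s) ×ˢ 𝓝 (c s)) :=
    tendsto_id.prodMk (tendsto_const_nhds.prodMk hc.continuousWithinAt)
  have hdslope : Tendsto (fun t => dslope (f t) (c s) (c t)) (𝓝[S \ {s}] s)
      (𝓝 (deriv (f s) (c s))) :=
    ((tendsto_dslope_of_continuousOn_prod hU hf hfd hs hcs).comp hpair).mono_left
      (nhdsWithin_mono s sdiff_subset)
  rw [hasDerivWithinAt_iff_tendsto_slope] at hf' hc ⊢
  refine (hf'.add (hc.smul hdslope)).congr fun t => ?_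
  simp only [slope_def_module, smul_assoc, ← smul_add, sub_smul_dslope, sub_add_sub_cancel']

end HolomorphicFamilies

section LinearODE

variable {E : Type*} [NormedAddCommGroup E] [NormedSpace ℂ E] {q l : ℝ → ℂ} {y f : ℝ → E}
  {a b s t T α μ H M : ℝ}

lemma hasDerivWithinAt_integral_of_continuousOn_Icc {F : Type*} [NormedAddCommGroup F]
    [NormedSpace ℝ F] [CompleteSpace F] {q : ℝ → F} (hq : ContinuousOn q (Icc a b))
    (hs : s ∈ Icc a b) :
    HasDerivWithinAt (fun u => ∫ x in a..u, q x) (q s) (Icc a b) s := by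
  have : Fact (s ∈ Icc a b) := ⟨hs⟩
  have hqs : IntervalIntegrable q volume a s :=
    (hq.mono (uIcc_of_le hs.1 ▸ Icc_subset_Icc_right hs.2)).intervalIntegrable
  exact intervalIntegral.integral_hasDerivWithinAt_right hqs
    (hq.stronglyMeasurableAtFilter_nhdsWithin measurableSet_Icc s) (hq s hs)

lemma hasDerivWithinAt_exp_neg_integral_smul (hq : ContinuousOn q (Icc a b)) (hs : s ∈ Icc a b)
    (hy : HasDerivWithinAt y (q s • y s + f s) (Icc a b) s) :
    HasDerivWithinAt (fun u => exp (-∫ x in a..u, q x) • y u) (exp (-∫ x in a..s, q x) • f s)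
      (Icc a b) s := by
  refine ((hasDerivWithinAt_integral_of_continuousOn_Icc hq hs).fun_neg.cexp.fun_smul
    hy).congr_deriv ?_
  rw [smul_add, smul_smul, mul_neg, neg_smul]
  abel

lemma norm_exp_neg_integral_smul_sub_le {β : ℝ → ℝ} (hab : a ≤ b) (hq : ContinuousOn q (Icc a b))
    (hy : ∀ s ∈ Icc a b, HasDerivWithinAt y (q s • y s + f s) (Icc a b) s)
    (hf : ∀ s ∈ Icc a b, ‖exp (-∫ x in a..s, q x) • f s‖ ≤ β s)
    (hβ : IntervalIntegrable β volume a b) :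
    ‖exp (-∫ x in a..b, q x) • y b - y a‖ ≤ ∫ s in a..b, β s := by
  have hderiv (s : ℝ) (hs : s ∈ Icc a b) := hasDerivWithinAt_exp_neg_integral_smul hq hs (hy s hs)
  have hderivAt (s : ℝ) (hs : s ∈ Ioo a b) :=
    (hderiv s (Ioo_subset_Icc_self hs)).hasDerivAt (Icc_mem_nhds hs.1 hs.2)
  have := norm_sub_le_integral_of_norm_deriv_le_of_le hab
    (fun s hs => (hderiv s hs).continuousWithinAt)
    (fun s hs => (hderivAt s hs).differentiableAt.differentiableWithinAt)
    (Eventually.of_forall fun s hs =>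
      (hderivAt s hs).deriv ▸ hf s (Ioo_subset_Icc_self hs)) hβ
  simpa using this

lemma exp_neg_integral_smul_eq (hab : a ≤ b) (hq : ContinuousOn q (Icc a b))
    (hy : ∀ s ∈ Icc a b, HasDerivWithinAt y (q s • y s) (Icc a b) s) :
    exp (-∫ x in a..b, q x) • y b = y a := by
  have := norm_exp_neg_integral_smul_sub_le (y := y) (f := 0) (β := 0) hab hq
    (by simpa using hy) (by simp) intervalIntegrable_const
  simpa [sub_eq_zero] using this

lemma norm_exp_neg_integral_div_le (ht : 0 < t) (hts : t ≤ s) (hl : ContinuousOn l (Icc t s))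
    (hα : ∀ x ∈ Icc t s, α ≤ (l x).re) : ‖exp (-∫ x in t..s, l x / x)‖ ≤ (t / s) ^ α := by
  have hs : 0 < s := ht.trans_le hts
  have hpos (x : ℝ) (hx : x ∈ Icc t s) : 0 < x := ht.trans_le hx.1
  have hquot : ContinuousOn (fun x : ℝ => l x / x) (Icc t s) :=
    hl.div continuous_ofReal.continuousOn fun x hx => ofReal_ne_zero.2 (hpos x hx).ne'
  have hre : (∫ x in t..s, l x / x).re = ∫ x in t..s, (l x / x).re :=
    (reCLM.intervalIntegral_comp_comm
      (hquot.mono (uIcc_of_le hts).subset).intervalIntegrable).symm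
  have hlog : α * Real.log (s / t) ≤ ∫ x in t..s, (l x / x).re := by
    rw [← integral_one_div_of_pos ht hs, ← intervalIntegral.integral_const_mul]
    refine intervalIntegral.integral_mono_on_of_le_Ioo hts ?_ ?_ fun x hx => ?_
    · exact (intervalIntegral.intervalIntegrable_one_div
        (fun x hx => (hpos x (uIcc_of_le hts ▸ hx)).ne') continuousOn_id).const_mul α
    · exact ((continuous_re.comp_continuousOn hquot).mono
        (uIcc_of_le hts).subset).intervalIntegrable
    · have hx := Ioo_subset_Icc_self hx
      rw [div_ofReal_re, mul_one_div]
      exact div_le_div_of_nonneg_right (hα x hx) (hpos x hx).le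
  rw [norm_exp, neg_re, hre, Real.rpow_def_of_pos (by positivity), Real.exp_le_exp,
    ← inv_div s t, Real.log_inv]
  linarith

lemma integral_div_rpow_mul_rpow_sub_one_le (ht : 0 < t) (htT : t ≤ T) (hμ : μ < α) :
    ∫ s in t..T, (t / s) ^ α * s ^ (μ - 1) ≤ t ^ μ / (α - μ) := by
  have hT : 0 < T := ht.trans_le htT
  have : 0 < α - μ := sub_pos.2 hμ
  have h0 : (0 : ℝ) ∉ uIcc t T := fun h => ht.not_ge (uIcc_of_le htT ▸ h).1
  have hpow : EqOn (fun s => (t / s) ^ α * s ^ (μ - 1)) (fun s => t ^ α * s ^ (μ - α - 1))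
      (uIcc t T) := fun s hs => by
    have hs : 0 < s := ht.trans_le (uIcc_of_le htT ▸ hs).1
    dsimp only
    rw [Real.div_rpow ht.le hs.le, div_mul_eq_mul_div, mul_div_assoc, ← Real.rpow_sub hs,
      sub_right_comm]
  rw [intervalIntegral.integral_congr hpow, intervalIntegral.integral_const_mul,
    integral_rpow (Or.inr ⟨by linarith, h0⟩), sub_add_cancel]
  calc t ^ α * ((T ^ (μ - α) - t ^ (μ - α)) / (μ - α))
      = t ^ α * (t ^ (μ - α) - T ^ (μ - α)) / (α - μ) := by
        rw [← neg_sub α μ, div_neg]; ring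
    _ ≤ t ^ α * t ^ (μ - α) / (α - μ) := by gcongr; linarith [Real.rpow_pos_of_pos hT (μ - α)]
    _ = t ^ μ / (α - μ) := by rw [← Real.rpow_add ht, add_sub_cancel]

lemma norm_le_of_fuchsian_ode (ht : 0 < t) (htT : t ≤ T) (hμ : μ < α)
    (hl : ContinuousOn l (Icc t T)) (hα : ∀ s ∈ Icc t T, α ≤ (l s).re)
    (hf : ∀ s ∈ Icc t T, ‖f s‖ ≤ H * s ^ μ)
    (hy : ∀ s ∈ Icc t T, HasDerivWithinAt y ((s : ℂ)⁻¹ • (l s • y s + f s)) (Icc t T) s)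
    (hM : ‖y T‖ ≤ M) :
    ‖y t‖ ≤ M * (t / T) ^ α + H / (α - μ) * t ^ μ := by
  have hpos (s : ℝ) (hs : s ∈ Icc t T) : 0 < s := ht.trans_le hs.1
  have hH : 0 ≤ H := nonneg_of_mul_nonneg_left
    ((norm_nonneg _).trans (hf t (left_mem_Icc.2 htT))) (Real.rpow_pos_of_pos ht μ)
  have hq : ContinuousOn (fun s : ℝ => l s / s) (Icc t T) :=
    hl.div continuous_ofReal.continuousOn fun s hs => ofReal_ne_zero.2 (hpos s hs).ne'
  have hfactor (s : ℝ) (hs : s ∈ Icc t T) : ‖exp (-∫ x in t..s, l x / x)‖ ≤ (t / s) ^ α :=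
    norm_exp_neg_integral_div_le ht hs.1 (hl.mono (Icc_subset_Icc_right hs.2))
      fun x hx => hα x ⟨hx.1, hx.2.trans hs.2⟩
  have hforcing (s : ℝ) (hs : s ∈ Icc t T) :
      ‖exp (-∫ x in t..s, l x / x) • (s : ℂ)⁻¹ • f s‖ ≤ H * ((t / s) ^ α * s ^ (μ - 1)) := by
    have hs0 := hpos s hs
    calc _ ≤ (t / s) ^ α * (s⁻¹ * (H * s ^ μ)) := by
          rw [norm_smul, norm_smul, norm_inv, norm_real, Real.norm_of_nonneg hs0.le]
          gcongr
          exacts [hfactor s hs, hf s hs]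
      _ = H * ((t / s) ^ α * s ^ (μ - 1)) := by rw [Real.rpow_sub_one hs0.ne']; ring
  have hne (s : ℝ) (hs : s ∈ uIcc t T) : s ≠ 0 := (hpos s (uIcc_of_le htT ▸ hs)).ne'
  have hβ : ContinuousOn (fun s => H * ((t / s) ^ α * s ^ (μ - 1))) (uIcc t T) :=
    continuousOn_const.mul <|
      ((continuousOn_const.div continuousOn_id hne).rpow_const
        fun s hs => Or.inl (div_ne_zero ht.ne' (hne s hs))).mul
      (continuousOn_id.rpow_const fun s hs => Or.inl (hne s hs))
  have hvariation := norm_exp_neg_integral_smul_sub_le htT hq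
    (fun s hs => (hy s hs).congr_deriv (by rw [smul_add, smul_smul, inv_mul_eq_div])) hforcing
    hβ.intervalIntegrable
  rw [intervalIntegral.integral_const_mul] at hvariation
  have hterminal : ‖exp (-∫ x in t..T, l x / x) • y T‖ ≤ M * (t / T) ^ α := by
    rw [norm_smul, mul_comm]
    exact mul_le_mul hM (hfactor T (right_mem_Icc.2 htT)) (norm_nonneg _)
      ((norm_nonneg _).trans hM)
  calc ‖y t‖ ≤ ‖exp (-∫ x in t..T, l x / x) • y T‖
        + ‖exp (-∫ x in t..T, l x / x) • y T - y t‖ := norm_le_norm_add_norm_sub _ _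
    _ ≤ M * (t / T) ^ α + H * (t ^ μ / (α - μ)) :=
        add_le_add hterminal (hvariation.trans
          (mul_le_mul_of_nonneg_left (integral_div_rpow_mul_rpow_sub_one_le ht htT hμ) hH))
    _ = M * (t / T) ^ α + H / (α - μ) * t ^ μ := by ring

lemma norm_sub_le_of_fuchsian_ode {l₁ l₂ : ℝ → ℂ} {y₁ y₂ f₁ f₂ : ℝ → E} {C D N : ℝ} (ht : 0 < t)
    (htT : t ≤ T) (hμ : μ < α) (hl₁ : ContinuousOn l₁ (Icc t T))
    (hα : ∀ s ∈ Icc t T, α ≤ (l₁ s).re)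
    (hy₁ : ∀ s ∈ Icc t T,
      HasDerivWithinAt y₁ ((s : ℂ)⁻¹ • (l₁ s • y₁ s + f₁ s)) (Icc t T) s)
    (hy₂ : ∀ s ∈ Icc t T,
      HasDerivWithinAt y₂ ((s : ℂ)⁻¹ • (l₂ s • y₂ s + f₂ s)) (Icc t T) s)
    (hD : ∀ s ∈ Icc t T, ‖l₁ s - l₂ s‖ ≤ D) (hC : ∀ s ∈ Icc t T, ‖y₂ s‖ ≤ C * s ^ μ)
    (hN : ∀ s ∈ Icc t T, ‖f₁ s - f₂ s‖ ≤ N * s ^ μ) (hM : ‖y₁ T - y₂ T‖ ≤ M) :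
    ‖y₁ t - y₂ t‖ ≤ M * (t / T) ^ α + (D * C + N) / (α - μ) * t ^ μ := by
  refine norm_le_of_fuchsian_ode (y := fun s => y₁ s - y₂ s)
    (f := fun s => (l₁ s - l₂ s) • y₂ s + (f₁ s - f₂ s)) ht htT hμ hl₁ hα (fun s hs => ?_)
    (fun s hs => ((hy₁ s hs).fun_sub (hy₂ s hs)).congr_deriv ?_) hM
  · calc ‖(l₁ s - l₂ s) • y₂ s + (f₁ s - f₂ s)‖ ≤ D * (C * s ^ μ) + N * s ^ μ := by
          refine norm_add_le_of_le ?_ (hN s hs)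
          rw [norm_smul]
          exact mul_le_mul (hD s hs) (hC s hs) (norm_nonneg _) ((norm_nonneg _).trans (hD s hs))
      _ = (D * C + N) * s ^ μ := by ring
  · rw [← smul_sub, smul_sub (l₁ s), sub_smul]
    congr 1
    abel

lemma div_rpow_le_rpow_neg_mul_rpow (ht : 0 < t) (htT : t ≤ T) (hμ : μ ≤ α) :
    (t / T) ^ α ≤ T ^ (-μ) * t ^ μ := by
  have hT : 0 < T := ht.trans_le htT
  calc (t / T) ^ α ≤ (t / T) ^ μ :=
        Real.rpow_le_rpow_of_exponent_ge (div_pos ht hT) ((div_le_one hT).2 htT) hμ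
    _ = T ^ (-μ) * t ^ μ := by
        rw [Real.div_rpow ht.le hT.le, Real.rpow_neg hT.le, div_eq_inv_mul]

lemma mul_div_rpow_add_le_mul_rpow (ht : 0 < t) (htT : t ≤ T) (hμ : μ ≤ α) (hM : 0 ≤ M) :
    M * (t / T) ^ α + H * t ^ μ ≤ (M * T ^ (-μ) + H) * t ^ μ := by
  rw [add_mul, mul_assoc]
  gcongr
  exact div_rpow_le_rpow_neg_mul_rpow ht htT hμ

end LinearODE

lemma intervalIntegrable_of_integrableOn_Ioc {q : ℝ → ℝ} {a b s : ℝ} (hs : s ∈ Ioc a b)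
    (hq : IntegrableOn q (Ioc a b)) : IntervalIntegrable q volume s b :=
  (intervalIntegrable_iff_integrableOn_Ioc_of_le hs.2).2
    (hq.mono_set (Ioc_subset_Ioc_left hs.1.le))

lemma intervalIntegral_le_setIntegral_Ioc {q : ℝ → ℝ} {a b s : ℝ} (hs : s ∈ Ioc a b)
    (hq : IntegrableOn q (Ioc a b)) (hq₀ : ∀ u ∈ Ioc a b, 0 ≤ q u) :
    ∫ u in s..b, q u ≤ ∫ u in Ioc a b, q u := by
  rw [intervalIntegral.integral_of_le hs.2]
  exact setIntegral_mono_set hq (ae_restrict_of_forall_mem measurableSet_Ioc hq₀)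
    (Ioc_subset_Ioc_left hs.1.le).eventuallyLE

/-- `P t x` is the value at time `t ∈ (0, T]` of the solution of `∂P/∂t = v(t, P)` that passes
through `x ∈ U` at the terminal time `T`. Orbits stay in a convex open set `V` on which the vector
field is holomorphic in space, with spatial derivative dominated by the integrable function `k` of
time; no regularity is required as `t → 0`. -/
structure IsHolomorphicFlow (T : ℝ) (U V : Set ℂ) (k : ℝ → ℝ) (v P : ℝ → ℂ → ℂ) : Prop where
  isOpen_source : IsOpen U
  isOpen_target : IsOpen V
  convex_target : Convex ℝ V
  terminal_eq : ∀ x ∈ U, P T x = x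
  mem_target : ∀ s ∈ Ioc 0 T, ∀ x ∈ U, P s x ∈ V
  hasDerivWithinAt_orbit : ∀ s ∈ Ioc 0 T, ∀ x ∈ U,
    HasDerivWithinAt (fun u => P u x) (v s (P s x)) (Ioc 0 T) s
  continuousOn_field : ContinuousOn (fun p : ℝ × ℂ => v p.1 p.2) (Ioc 0 T ×ˢ V)
  differentiableOn_field : ∀ s ∈ Ioc 0 T, DifferentiableOn ℂ (v s) V
  norm_deriv_field_le : ∀ s ∈ Ioc 0 T, ∀ y ∈ V, ‖deriv (v s) y‖ ≤ k s
  integrableOn_bound : IntegrableOn k (Ioc 0 T)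

/-- The common Lipschitz constant `exp (∫₀ᵀ k)` of the time-`t` maps, `0 < t ≤ T`, of a flow whose
field is `k t`-Lipschitz in space, and of their inverses. -/
def flowDistortion (T : ℝ) (k : ℝ → ℝ) : ℝ := Real.exp (∫ s in Ioc 0 T, k s)

lemma flowDistortion_pos (T : ℝ) (k : ℝ → ℝ) : 0 < flowDistortion T k := Real.exp_pos _

namespace IsHolomorphicFlow

variable {T : ℝ} {U V : Set ℂ} {k : ℝ → ℝ} {v P : ℝ → ℂ → ℂ} {s t : ℝ} {x x₀ : ℂ}

lemma continuousOn_orbit (F : IsHolomorphicFlow T U V k v P) (hx : x ∈ U) :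
    ContinuousOn (fun s => P s x) (Ioc 0 T) :=
  fun s hs => (F.hasDerivWithinAt_orbit s hs x hx).continuousWithinAt

lemma continuousOn_dslope (F : IsHolomorphicFlow T U V k v P) (hx : x ∈ U) (hx₀ : x₀ ∈ U) :
    ContinuousOn (fun s => dslope (v s) (P s x₀) (P s x)) (Ioc 0 T) :=
  (continuousOn_dslope_of_continuousOn_prod F.isOpen_target F.continuousOn_field
    F.differentiableOn_field).comp (f := fun s => (s, P s x₀, P s x))
    (continuousOn_id.prodMk ((F.continuousOn_orbit hx₀).prodMk (F.continuousOn_orbit hx)))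
    fun s hs => ⟨hs, F.mem_target s hs x₀ hx₀, F.mem_target s hs x hx⟩

lemma norm_dslope_le (F : IsHolomorphicFlow T U V k v P) (hs : s ∈ Ioc 0 T) (hx : x ∈ U)
    (hx₀ : x₀ ∈ U) : ‖dslope (v s) (P s x₀) (P s x)‖ ≤ k s :=
  norm_dslope_le_of_norm_deriv_le F.convex_target
    (fun _ hy => (F.differentiableOn_field s hs).differentiableAt (F.isOpen_target.mem_nhds hy))
    (F.norm_deriv_field_le s hs) (F.mem_target s hs x₀ hx₀) (F.mem_target s hs x hx)

/-- The difference of two orbits solves the linear equation `d' = dslope (v s) (P s x₀) (P s x) d`,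
so the secant slopes of the flow are explicit exponentials. -/
lemma sub_eq_exp_mul (F : IsHolomorphicFlow T U V k v P) (ht : t ∈ Ioc 0 T) (hx : x ∈ U)
    (hx₀ : x₀ ∈ U) :
    P t x - P t x₀ = exp (-∫ s in t..T, dslope (v s) (P s x₀) (P s x)) * (x - x₀) := by
  have hsub : Icc t T ⊆ Ioc 0 T := fun s hs => ⟨ht.1.trans_le hs.1, hs.2⟩
  have hode (s : ℝ) (hs : s ∈ Icc t T) : HasDerivWithinAt (fun u => P u x - P u x₀)
      (dslope (v s) (P s x₀) (P s x) • (P s x - P s x₀)) (Icc t T) s := by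
    refine (((F.hasDerivWithinAt_orbit s (hsub hs) x hx).fun_sub
      (F.hasDerivWithinAt_orbit s (hsub hs) x₀ hx₀)).mono hsub).congr_deriv ?_
    rw [smul_eq_mul, mul_comm, ← smul_eq_mul, sub_smul_dslope]
  have hexp := exp_neg_integral_smul_eq ht.2 ((F.continuousOn_dslope hx hx₀).mono hsub) hode
  rw [← hexp, F.terminal_eq x hx, F.terminal_eq x₀ hx₀, smul_eq_mul]

lemma injOn (F : IsHolomorphicFlow T U V k v P) (ht : t ∈ Ioc 0 T) : InjOn (P t) U := by
  intro x hx x₀ hx₀ h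
  simpa [sub_eq_zero, h, exp_ne_zero] using (F.sub_eq_exp_mul ht hx hx₀).symm

lemma norm_integral_dslope_le (F : IsHolomorphicFlow T U V k v P) (ht : t ∈ Ioc 0 T) (hx : x ∈ U)
    (hx₀ : x₀ ∈ U) :
    ‖∫ s in t..T, dslope (v s) (P s x₀) (P s x)‖ ≤ ∫ s in Ioc 0 T, k s := by
  calc ‖∫ s in t..T, dslope (v s) (P s x₀) (P s x)‖ ≤ ∫ s in t..T, k s :=
        intervalIntegral.norm_integral_le_of_norm_le ht.2
          (Eventually.of_forall fun s hs => F.norm_dslope_le ⟨ht.1.trans hs.1, hs.2⟩ hx hx₀)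
          (intervalIntegrable_of_integrableOn_Ioc ht F.integrableOn_bound)
    _ ≤ ∫ s in Ioc 0 T, k s := intervalIntegral_le_setIntegral_Ioc ht F.integrableOn_bound
        fun s hs => (norm_nonneg _).trans (F.norm_dslope_le hs hx hx₀)

lemma norm_sub_le (F : IsHolomorphicFlow T U V k v P) (ht : t ∈ Ioc 0 T) (hx : x ∈ U)
    (hx₀ : x₀ ∈ U) : ‖P t x - P t x₀‖ ≤ flowDistortion T k * ‖x - x₀‖ := by
  rw [F.sub_eq_exp_mul ht hx hx₀, norm_mul, norm_exp, neg_re]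
  refine mul_le_mul_of_nonneg_right (Real.exp_le_exp.2 ?_) (norm_nonneg _)
  exact (neg_le_abs _).trans ((abs_re_le_norm _).trans (F.norm_integral_dslope_le ht hx hx₀))

lemma norm_sub_le_norm_flow_sub (F : IsHolomorphicFlow T U V k v P) (ht : t ∈ Ioc 0 T)
    (hx : x ∈ U) (hx₀ : x₀ ∈ U) : ‖x - x₀‖ ≤ flowDistortion T k * ‖P t x - P t x₀‖ := by
  have hre := (re_le_norm _).trans (F.norm_integral_dslope_le ht hx hx₀)
  rw [F.sub_eq_exp_mul ht hx hx₀, norm_mul, norm_exp, neg_re, ← mul_assoc, flowDistortion,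
    ← Real.exp_add]
  exact le_mul_of_one_le_left (norm_nonneg _) (Real.one_le_exp (by linarith))

lemma continuousAt (F : IsHolomorphicFlow T U V k v P) (ht : t ∈ Ioc 0 T) (hx₀ : x₀ ∈ U) :
    ContinuousAt (P t) x₀ := by
  obtain ⟨r, hr, hrU⟩ := Metric.isOpen_iff.1 F.isOpen_source x₀ hx₀
  refine continuousAt_of_locally_lipschitz hr (flowDistortion T k) fun x hx => ?_
  rw [dist_eq_norm, dist_eq_norm]
  exact F.norm_sub_le ht (hrU hx) hx₀

lemma hasDerivAt (F : IsHolomorphicFlow T U V k v P) (ht : t ∈ Ioc 0 T) (hx₀ : x₀ ∈ U) :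
    HasDerivAt (P t) (exp (-∫ s in t..T, deriv (v s) (P s x₀))) x₀ := by
  have hU : U ∈ 𝓝 x₀ := F.isOpen_source.mem_nhds hx₀
  have hsub : uIoc t T ⊆ Ioc 0 T := uIoc_of_le ht.2 ▸ Ioc_subset_Ioc_left ht.1.le
  have hlim : ContinuousAt (fun x => ∫ s in t..T, dslope (v s) (P s x₀) (P s x)) x₀ := by
    refine intervalIntegral.continuousAt_of_dominated_interval (bound := k) ?_ ?_
      (intervalIntegrable_of_integrableOn_Ioc ht F.integrableOn_bound) ?_
    · filter_upwards [hU] with x hx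
      exact ((F.continuousOn_dslope hx hx₀).mono hsub).aestronglyMeasurable measurableSet_uIoc
    · filter_upwards [hU] with x hx
      exact Eventually.of_forall fun s hs => F.norm_dslope_le (hsub hs) hx hx₀
    · refine Eventually.of_forall fun s hs => ?_
      have hdiff : DifferentiableAt ℂ (v s) (P s x₀) :=
        (F.differentiableOn_field s (hsub hs)).differentiableAt
          (F.isOpen_target.mem_nhds (F.mem_target s (hsub hs) x₀ hx₀))
      exact (continuousAt_dslope_same.2 hdiff).comp (f := P s) (F.continuousAt (hsub hs) hx₀)
  have hexp := hlim.fun_neg.cexp.tendsto.mono_left (nhdsWithin_le_nhds (s := {x₀}ᶜ))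
  simp only [dslope_same] at hexp
  rw [hasDerivAt_iff_tendsto_slope]
  refine hexp.congr' ?_
  filter_upwards [mem_nhdsWithin_of_mem_nhds hU, self_mem_nhdsWithin] with x hx hne
  rw [slope_def_field, F.sub_eq_exp_mul ht hx hx₀, mul_div_cancel_right₀ _ (sub_ne_zero.2 hne)]

lemma ball_subset_image_closedBall (F : IsHolomorphicFlow T U V k v P) (ht : t ∈ Ioc 0 T)
    {ρ : ℝ} (hρ : 0 < ρ) (hρU : closedBall x₀ ρ ⊆ U) :
    ball (P t x₀) (ρ / flowDistortion T k / 2) ⊆ P t '' closedBall x₀ ρ := by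
  have hx₀ : x₀ ∈ U := hρU (mem_closedBall_self hρ.le)
  have hdiff : DifferentiableOn ℂ (P t) (closure (ball x₀ ρ)) := fun x hx =>
    have hx : x ∈ U := hρU (closure_ball_subset_closedBall hx)
    (F.hasDerivAt ht hx).differentiableAt.differentiableWithinAt
  refine hdiff.diffContOnCl.ball_subset_image_closedBall hρ (fun x hx => ?_) ?_
  · rw [div_le_iff₀' (flowDistortion_pos T k), ← mem_sphere_iff_norm.1 hx]
    exact F.norm_sub_le_norm_flow_sub ht (hρU (sphere_subset_closedBall hx)) hx₀
  · have hev : ∀ᶠ x in 𝓝[≠] x₀, P t x ≠ P t x₀ := by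
      filter_upwards [mem_nhdsWithin_of_mem_nhds (F.isOpen_source.mem_nhds hx₀),
        self_mem_nhdsWithin] with x hx hne
      exact (F.injOn ht).ne hx hx₀ hne
    exact hev.frequently.filter_mono nhdsWithin_le_nhds

lemma exists_ball_subset_image (F : IsHolomorphicFlow T U V k v P) (hs : s ∈ Ioc 0 T)
    (hx₀ : x₀ ∈ U) : ∃ δ > 0, ∀ t ∈ Ioc 0 T ∩ ball s δ, ball (P s x₀) δ ⊆ P t '' U := by
  obtain ⟨ρ, hρ, hρU⟩ := Metric.nhds_basis_closedBall.mem_iff.1 (F.isOpen_source.mem_nhds hx₀)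
  have hη : 0 < ρ / flowDistortion T k / 4 := by
    have := flowDistortion_pos T k
    positivity
  obtain ⟨δ, hδ, hclose⟩ := Metric.continuousWithinAt_iff.1 (F.continuousOn_orbit hx₀ s hs) _ hη
  refine ⟨min δ (ρ / flowDistortion T k / 4), lt_min hδ hη, fun t ht y hy => ?_⟩
  have hyt : y ∈ ball (P t x₀) (ρ / flowDistortion T k / 2) := by
    have horbit := hclose ht.1 ((mem_ball.1 ht.2).trans_le (min_le_left _ _))
    have hy' := (mem_ball.1 hy).trans_le (min_le_right _ _)
    rw [mem_ball]
    linarith [dist_triangle_right y (P t x₀) (P s x₀)]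
  exact image_mono hρU (F.ball_subset_image_closedBall ht.1 hρ hρU hyt)

lemma image_mem_nhds (F : IsHolomorphicFlow T U V k v P) (hs : s ∈ Ioc 0 T) (hx : x ∈ U) :
    P s '' U ∈ 𝓝 (P s x) := by
  obtain ⟨δ, hδ, hball⟩ := F.exists_ball_subset_image hs hx
  exact mem_of_superset (ball_mem_nhds _ hδ) (hball s ⟨hs, mem_ball_self hδ⟩)

lemma norm_comp_sub_le {E : Type*} [NormedAddCommGroup E] [NormedSpace ℂ E] {f : ℂ → E} {C : ℝ}
    (F : IsHolomorphicFlow T U V k v P) (hU : Convex ℝ U) (ht : t ∈ Ioc 0 T)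
    (hf : ∀ x ∈ U, DifferentiableAt ℂ f (P t x)) (hC : ∀ x ∈ U, ‖deriv f (P t x)‖ ≤ C)
    (hx : x ∈ U) (hx₀ : x₀ ∈ U) :
    ‖f (P t x) - f (P t x₀)‖ ≤ C * flowDistortion T k * ‖x - x₀‖ := by
  refine hU.norm_image_sub_le_of_norm_hasDerivWithin_le (f := fun x => f (P t x))
    (fun z hz => ((hf z hz).hasDerivAt.scomp z (F.hasDerivAt ht hz)).hasDerivWithinAt)
    (fun z hz => ?_) hx₀ hx
  have hflow : ‖exp (-∫ s in t..T, deriv (v s) (P s z))‖ ≤ flowDistortion T k :=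
    (F.hasDerivAt ht hz).le_of_lip' (flowDistortion_pos T k).le
      (mem_of_superset (F.isOpen_source.mem_nhds hz) fun y hy => F.norm_sub_le ht hy hz)
  rw [norm_smul, mul_comm]
  exact mul_le_mul (hC z hz) hflow (norm_nonneg _) ((norm_nonneg _).trans (hC z hz))

lemma norm_deriv_le_of_norm_comp_sub_le {E : Type*} [NormedAddCommGroup E] [NormedSpace ℂ E]
    {f : ℂ → E} {C : ℝ} (F : IsHolomorphicFlow T U V k v P) (ht : t ∈ Ioc 0 T) (hC : 0 ≤ C)
    (hf : ∀ x ∈ U, ‖f (P t x) - f (P t x₀)‖ ≤ C * ‖x - x₀‖) (hx₀ : x₀ ∈ U) :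
    ‖deriv f (P t x₀)‖ ≤ C * flowDistortion T k := by
  refine norm_deriv_le_of_lip' (mul_nonneg hC (flowDistortion_pos T k).le) ?_
  filter_upwards [F.image_mem_nhds ht hx₀]
  rintro _ ⟨x, hx, rfl⟩
  rw [mul_assoc]
  exact (hf x hx).trans (mul_le_mul_of_nonneg_left (F.norm_sub_le_norm_flow_sub ht hx hx₀) hC)

end IsHolomorphicFlow

section BoundedField

lemma norm_sub_le_setIntegral_of_norm_deriv_le {E : Type*} [NormedAddCommGroup E]
    [NormedSpace ℝ E] {y y' : ℝ → E} {q : ℝ → ℝ} {T s : ℝ} (hs : s ∈ Ioc 0 T)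
    (hy : ∀ u ∈ Ioc 0 T, HasDerivWithinAt y (y' u) (Ioc 0 T) u)
    (hq : IntegrableOn q (Ioc 0 T)) (hyq : ∀ u ∈ Ioc 0 T, ‖y' u‖ ≤ q u) :
    ‖y s - y T‖ ≤ ∫ u in Ioc 0 T, q u := by
  have hderiv (u : ℝ) (hu : u ∈ Ioo s T) : HasDerivAt y (y' u) u :=
    (hy u ⟨hs.1.trans hu.1, hu.2.le⟩).hasDerivAt (Ioc_mem_nhds (hs.1.trans hu.1) hu.2)
  calc ‖y s - y T‖ = ‖y T - y s‖ := norm_sub_rev _ _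
    _ ≤ ∫ u in s..T, q u := norm_sub_le_integral_of_norm_deriv_le_of_le hs.2
        (fun u hu => (hy u ⟨hs.1.trans_le hu.1, hu.2⟩).continuousWithinAt.mono
          fun r hr => ⟨hs.1.trans_le hr.1, hr.2⟩)
        (fun u hu => (hderiv u hu).differentiableAt.differentiableWithinAt)
        (Eventually.of_forall fun u hu =>
          (hderiv u hu).deriv ▸ hyq u ⟨hs.1.trans hu.1, hu.2.le⟩)
        (intervalIntegrable_of_integrableOn_Ioc hs hq)
    _ ≤ ∫ u in Ioc 0 T, q u := intervalIntegral_le_setIntegral_Ioc hs hq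
        fun u hu => (norm_nonneg _).trans (hyq u hu)

lemma norm_deriv_le_of_norm_le_ball {E : Type*} [NormedAddCommGroup E] [NormedSpace ℂ E]
    {f : ℂ → E} {c z : ℂ} {r R C : ℝ} (hrR : r < R) (hf : DifferentiableOn ℂ f (ball c R))
    (hC : ∀ y ∈ ball c R, ‖f y‖ ≤ C) (hz : z ∈ ball c r) : ‖deriv f z‖ ≤ C / ((R - r) / 2) := by
  have hsub : closedBall z ((R - r) / 2) ⊆ ball c R :=
    closedBall_subset_ball' (by linarith [mem_ball.1 hz])
  refine norm_deriv_le_of_forall_mem_sphere_norm_le (half_pos (sub_pos.2 hrR)) ?_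
    fun y hy => hC y (hsub (sphere_subset_closedBall hy))
  exact (hf.mono (closure_ball_subset_closedBall.trans hsub)).diffContOnCl

lemma isHolomorphicFlow_of_norm_field_le {c : ℂ} {T R₁ R₀ : ℝ} {q : ℝ → ℝ} {v P : ℝ → ℂ → ℂ}
    (hv : ContinuousOn (fun p : ℝ × ℂ => v p.1 p.2) (Ioc 0 T ×ˢ ball c R₀))
    (hvd : ∀ s ∈ Ioc 0 T, DifferentiableOn ℂ (v s) (ball c R₀))
    (hq : IntegrableOn q (Ioc 0 T)) (hvq : ∀ s ∈ Ioc 0 T, ∀ y ∈ ball c R₀, ‖v s y‖ ≤ q s)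
    (hgap : R₁ + ∫ s in Ioc 0 T, q s < R₀) (hPT : ∀ x ∈ ball c R₁, P T x = x)
    (hP : ∀ x ∈ ball c R₁, ∀ s ∈ Ioc 0 T, P s x ∈ ball c R₀ ∧
      HasDerivWithinAt (fun u => P u x) (v s (P s x)) (Ioc 0 T) s) :
    IsHolomorphicFlow T (ball c R₁) (ball c (R₁ + ∫ s in Ioc 0 T, q s))
      (fun s => q s / ((R₀ - (R₁ + ∫ s in Ioc 0 T, q s)) / 2)) v P where
  isOpen_source := isOpen_ball
  isOpen_target := isOpen_ball
  convex_target := convex_ball _ _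
  terminal_eq := hPT
  mem_target s hs x hx := by
    have hdist : ‖P s x - P T x‖ ≤ ∫ s in Ioc 0 T, q s :=
      norm_sub_le_setIntegral_of_norm_deriv_le hs (fun u hu => (hP x hx u hu).2) hq
        fun u hu => hvq u hu _ (hP x hx u hu).1
    rw [hPT x hx, ← dist_eq_norm] at hdist
    rw [mem_ball]
    linarith [dist_triangle (P s x) x c, mem_ball.1 hx]
  hasDerivWithinAt_orbit s hs x hx := (hP x hx s hs).2
  continuousOn_field := hv.mono (prod_mono_right (ball_subset_ball hgap.le))
  differentiableOn_field s hs := (hvd s hs).mono (ball_subset_ball hgap.le)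
  norm_deriv_field_le s hs _ hy := norm_deriv_le_of_norm_le_ball hgap (hvd s hs) (hvq s hs) hy
  integrableOn_bound := hq.div_const _

end BoundedField

/-- The vector field `-b/t` whose integral curves are the characteristics of
`t ∂/∂t - λ - b ∂/∂x`. -/
def characteristicField (b : ℝ → ℂ → ℂ) (t : ℝ) (x : ℂ) : ℂ := -(b t x) / t

section Transport

variable {T : ℝ} {U V : Set ℂ} {k : ℝ → ℝ} {v P : ℝ → ℂ → ℂ} {W : Set (ℝ × ℂ)}
  {lam b f g w : ℝ → ℂ → ℂ} {s t : ℝ} {x x₀ : ℂ} {α μ C G L M M' : ℝ}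

namespace IsHolomorphicFlow

lemma differentiableAt_slice (F : IsHolomorphicFlow T U V k v P)
    (hW : ∀ s ∈ Ioc 0 T, ∀ x ∈ U, (s, P s x) ∈ W)
    (hf : ∀ s, DifferentiableOn ℂ (f s) {y | (s, y) ∈ W}) (hs : s ∈ Ioc 0 T) (hx : x ∈ U) :
    DifferentiableAt ℂ (f s) (P s x) :=
  (hf s).differentiableAt <|
    mem_of_superset (F.image_mem_nhds hs hx) (image_subset_iff.2 (hW s hs))

lemma continuousOn_comp_orbit (F : IsHolomorphicFlow T U V k v P)
    (hW : ∀ s ∈ Ioc 0 T, ∀ x ∈ U, (s, P s x) ∈ W)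
    (hf : ContinuousOn (fun p : ℝ × ℂ => f p.1 p.2) W) (hx : x ∈ U) :
    ContinuousOn (fun s => f s (P s x)) (Ioc 0 T) :=
  hf.comp (f := fun s => (s, P s x)) (continuousOn_id.prodMk (F.continuousOn_orbit hx))
    fun s hs => hW s hs x hx

lemma hasDerivWithinAt_solution (F : IsHolomorphicFlow T U V k (characteristicField b) P)
    (hW : ∀ s ∈ Ioc 0 T, ∀ x ∈ U, (s, P s x) ∈ W) (hw : MemX0W W w) (hLw : SolvesLW W lam b g w)
    (hs : s ∈ Ioc 0 T) (hx : x ∈ U) :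
    HasDerivWithinAt (fun u => w u (P u x))
      ((s : ℂ)⁻¹ • (lam s (P s x) • w s (P s x) + g s (P s x))) (Ioc 0 T) s := by
  obtain ⟨δ, hδ, hball⟩ := F.exists_ball_subset_image hs hx
  have htube : (Ioc 0 T ∩ ball s δ) ×ˢ ball (P s x) δ ⊆ W := by
    rintro ⟨t, y⟩ ⟨ht, hy⟩
    obtain ⟨z, hz, rfl⟩ := hball t ht hy
    exact hW t ht.1 z hz
  have hsδ : s ∈ Ioc 0 T ∩ ball s δ := ⟨hs, mem_ball_self hδ⟩
  have hvertical := (hLw s (P s x) (hW s hs x hx) hs.1).mono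
    fun t (ht : t ∈ Ioc 0 T ∩ ball s δ) => htube ⟨ht, mem_ball_self hδ⟩
  have hcurve := hasDerivWithinAt_comp_curve (c := fun u => P u x) isOpen_ball
    (hw.1.mono htube) (fun t ht => (hw.2 t).mono fun y hy => htube ⟨ht, hy⟩) hsδ
    (mem_ball_self hδ) hvertical ((F.hasDerivWithinAt_orbit s hs x hx).mono inter_subset_left)
  refine (hcurve.congr_deriv ?_).mono_of_mem_nhdsWithin
    (inter_mem_nhdsWithin _ (ball_mem_nhds _ hδ))
  simp only [characteristicField, smul_eq_mul]
  ring

lemma norm_solution_le (F : IsHolomorphicFlow T U V k (characteristicField b) P)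
    (hW : ∀ s ∈ Ioc 0 T, ∀ x ∈ U, (s, P s x) ∈ W) (hw : MemX0W W w) (hLw : SolvesLW W lam b g w)
    (hlam : ContinuousOn (fun p : ℝ × ℂ => lam p.1 p.2) W) (hα : ∀ p ∈ W, α ≤ (lam p.1 p.2).re)
    (hμ : μ < α) (hg : ∀ p ∈ W, ‖g p.1 p.2‖ ≤ G * p.1 ^ μ) (hM : ∀ x ∈ U, ‖w T x‖ ≤ M)
    (ht : t ∈ Ioc 0 T) (hx : x ∈ U) :
    ‖w t (P t x)‖ ≤ M * (t / T) ^ α + G / (α - μ) * t ^ μ := by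
  have hsub : Icc t T ⊆ Ioc 0 T := fun s hs => ⟨ht.1.trans_le hs.1, hs.2⟩
  exact norm_le_of_fuchsian_ode (y := fun s => w s (P s x)) ht.1 ht.2 hμ
    ((F.continuousOn_comp_orbit hW hlam hx).mono hsub)
    (fun s hs => hα _ (hW s (hsub hs) x hx)) (fun s hs => hg _ (hW s (hsub hs) x hx))
    (fun s hs => (F.hasDerivWithinAt_solution hW hw hLw (hsub hs) hx).mono hsub)
    ((F.terminal_eq x hx).symm ▸ hM x hx)

lemma norm_solution_sub_le (F : IsHolomorphicFlow T U V k (characteristicField b) P)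
    (hU : Convex ℝ U) (hW : ∀ s ∈ Ioc 0 T, ∀ x ∈ U, (s, P s x) ∈ W) (hw : MemX0W W w)
    (hLw : SolvesLW W lam b g w) (hlam : MemX0W W lam) (hα : ∀ p ∈ W, α ≤ (lam p.1 p.2).re)
    (hlam' : ∀ p ∈ W, ‖deriv (lam p.1) p.2‖ ≤ L) (hμ : μ < α)
    (hgd : ∀ s, DifferentiableOn ℂ (g s) {y | (s, y) ∈ W})
    (hg' : ∀ p ∈ W, ‖deriv (g p.1) p.2‖ ≤ G * p.1 ^ μ)
    (hC : ∀ s ∈ Ioc 0 T, ∀ x ∈ U, ‖w s (P s x)‖ ≤ C * s ^ μ)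
    (hM : ∀ x ∈ U, ‖deriv (w T) x‖ ≤ M) (ht : t ∈ Ioc 0 T) (hx : x ∈ U) (hx₀ : x₀ ∈ U) :
    ‖w t (P t x) - w t (P t x₀)‖ ≤
      (M * T ^ (-μ) + (L * C + G) * flowDistortion T k / (α - μ)) * t ^ μ * ‖x - x₀‖ := by
  have hsub : Icc t T ⊆ Ioc 0 T := fun s hs => ⟨ht.1.trans_le hs.1, hs.2⟩
  have hT : T ∈ Ioc 0 T := ⟨ht.1.trans_le ht.2, le_rfl⟩
  have hterminal : ‖w T (P T x) - w T (P T x₀)‖ ≤ M * ‖x - x₀‖ := by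
    rw [F.terminal_eq x hx, F.terminal_eq x₀ hx₀]
    exact hU.norm_image_sub_le_of_norm_deriv_le
      (fun z hz => F.terminal_eq z hz ▸ F.differentiableAt_slice hW hw.2 hT hz) hM hx₀ hx
  have hforcing (s : ℝ) (hs : s ∈ Icc t T) :
      ‖g s (P s x) - g s (P s x₀)‖ ≤ G * flowDistortion T k * ‖x - x₀‖ * s ^ μ := by
    refine (F.norm_comp_sub_le hU (hsub hs) (C := G * s ^ μ)
      (fun z hz => F.differentiableAt_slice hW hgd (hsub hs) hz)
      (fun z hz => hg' _ (hW s (hsub hs) z hz)) hx hx₀).trans_eq ?_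
    ring
  have hcompare := norm_sub_le_of_fuchsian_ode (y₁ := fun s => w s (P s x))
    (y₂ := fun s => w s (P s x₀)) ht.1 ht.2 hμ
    ((F.continuousOn_comp_orbit hW hlam.1 hx).mono hsub)
    (fun s hs => hα _ (hW s (hsub hs) x hx))
    (fun s hs => (F.hasDerivWithinAt_solution hW hw hLw (hsub hs) hx).mono hsub)
    (fun s hs => (F.hasDerivWithinAt_solution hW hw hLw (hsub hs) hx₀).mono hsub)
    (fun s hs => F.norm_comp_sub_le hU (hsub hs)
      (fun z hz => F.differentiableAt_slice hW hlam.2 (hsub hs) hz)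
      (fun z hz => hlam' _ (hW s (hsub hs) z hz)) hx hx₀)
    (fun s hs => hC s (hsub hs) x₀ hx₀)
    hforcing hterminal
  refine (hcompare.trans (mul_div_rpow_add_le_mul_rpow ht.1 ht.2 hμ.le
    ((norm_nonneg _).trans hterminal))).trans_eq ?_
  ring

lemma norm_deriv_solution_le (F : IsHolomorphicFlow T U V k (characteristicField b) P)
    (hU : Convex ℝ U) (hW : ∀ s ∈ Ioc 0 T, ∀ x ∈ U, (s, P s x) ∈ W) (hw : MemX0W W w)
    (hLw : SolvesLW W lam b g w) (hlam : MemX0W W lam) (hα : ∀ p ∈ W, α ≤ (lam p.1 p.2).re)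
    (hlam' : ∀ p ∈ W, ‖deriv (lam p.1) p.2‖ ≤ L) (hμ : μ < α)
    (hgd : ∀ s, DifferentiableOn ℂ (g s) {y | (s, y) ∈ W})
    (hg' : ∀ p ∈ W, ‖deriv (g p.1) p.2‖ ≤ G * p.1 ^ μ)
    (hC : ∀ s ∈ Ioc 0 T, ∀ x ∈ U, ‖w s (P s x)‖ ≤ C * s ^ μ)
    (hM : ∀ x ∈ U, ‖deriv (w T) x‖ ≤ M) (ht : t ∈ Ioc 0 T) (hx₀ : x₀ ∈ U) :
    ‖deriv (w t) (P t x₀)‖ ≤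
      (M * T ^ (-μ) + (L * C + G) * flowDistortion T k / (α - μ)) * flowDistortion T k
        * t ^ μ := by
  have hpos {A : ℝ} {s : ℝ} {z : ℂ} (hs : s ∈ Ioc 0 T) (hz : ‖z‖ ≤ A * s ^ μ) : 0 ≤ A :=
    nonneg_of_mul_nonneg_left ((norm_nonneg z).trans hz) (Real.rpow_pos_of_pos hs.1 μ)
  have hC₀ : 0 ≤ C := hpos ht (hC t ht x₀ hx₀)
  have hG₀ : 0 ≤ G := hpos ht (hg' _ (hW t ht x₀ hx₀))
  have hL₀ : 0 ≤ L := (norm_nonneg _).trans (hlam' _ (hW t ht x₀ hx₀))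
  have hM₀ : 0 ≤ M := (norm_nonneg _).trans (hM x₀ hx₀)
  have hE := flowDistortion_pos T k
  have := sub_pos.2 hμ
  have ht₀ := ht.1
  have hT₀ := ht.1.trans_le ht.2
  refine (F.norm_deriv_le_of_norm_comp_sub_le ht (by positivity) (fun x hx =>
    F.norm_solution_sub_le hU hW hw hLw hlam hα hlam' hμ hgd hg' hC hM ht hx hx₀) hx₀).trans_eq ?_
  ring

lemma exists_norm_solution_le (F : IsHolomorphicFlow T U V k (characteristicField b) P)
    (hU : Convex ℝ U) (hW : ∀ s ∈ Ioc 0 T, ∀ x ∈ U, (s, P s x) ∈ W) (hw : MemX0W W w)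
    (hLw : SolvesLW W lam b g w) (hlam : MemX0W W lam) (hα : ∀ p ∈ W, α ≤ (lam p.1 p.2).re)
    (hlam' : ∀ p ∈ W, ‖deriv (lam p.1) p.2‖ ≤ L) (hμ : μ < α)
    (hgd : ∀ s, DifferentiableOn ℂ (g s) {y | (s, y) ∈ W})
    (hg : ∀ p ∈ W, max ‖g p.1 p.2‖ ‖deriv (g p.1) p.2‖ ≤ G * p.1 ^ μ)
    (hM : ∀ x ∈ U, ‖w T x‖ ≤ M) (hM' : ∀ x ∈ U, ‖deriv (w T) x‖ ≤ M') :
    ∃ C > 0, ∀ t ∈ Ioc 0 T, ∀ x ∈ U,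
      max ‖w t (P t x)‖ ‖deriv (w t) (P t x)‖ ≤ C * t ^ μ := by
  obtain ⟨C₀, hvalue⟩ : ∃ C₀, ∀ t ∈ Ioc 0 T, ∀ x ∈ U, ‖w t (P t x)‖ ≤ C₀ * t ^ μ :=
    ⟨_, fun t ht x hx => (F.norm_solution_le hW hw hLw hlam.1 hα hμ
      (fun p hp => le_of_max_le_left (hg p hp)) hM ht hx).trans
      (mul_div_rpow_add_le_mul_rpow ht.1 ht.2 hμ.le ((norm_nonneg _).trans (hM x hx)))⟩
  obtain ⟨C₁, hderiv⟩ : ∃ C₁, ∀ t ∈ Ioc 0 T, ∀ x ∈ U, ‖deriv (w t) (P t x)‖ ≤ C₁ * t ^ μ :=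
    ⟨_, fun t ht x hx => F.norm_deriv_solution_le hU hW hw hLw hlam hα hlam' hμ hgd
      (fun p hp => le_of_max_le_right (hg p hp)) hvalue hM' ht hx⟩
  refine ⟨max 1 (max C₀ C₁), zero_lt_one.trans_le (le_max_left _ _), fun t ht x hx => ?_⟩
  have hpow : 0 ≤ t ^ μ := Real.rpow_nonneg ht.1.le μ
  calc max ‖w t (P t x)‖ ‖deriv (w t) (P t x)‖ ≤ max (C₀ * t ^ μ) (C₁ * t ^ μ) :=
        max_le_max (hvalue t ht x hx) (hderiv t ht x hx)
    _ = max C₀ C₁ * t ^ μ := (max_mul_of_nonneg _ _ hpow).symm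
    _ ≤ max 1 (max C₀ C₁) * t ^ μ := mul_le_mul_of_nonneg_right (le_max_right _ _) hpow

end IsHolomorphicFlow

end Transport

section CharacteristicDomain

variable {T R R₁ R₀ B : ℝ} {m : ℝ → ℝ} {S S' : Set ℝ} {W : Set (ℝ × ℂ)} {b f : ℝ → ℂ → ℂ}
  {Φ : ℝ → ℝ → ℂ → ℂ}

lemma MemX0.mono (hf : MemX0 S' R f) (hS : S ⊆ S') : MemX0 S R f :=
  ⟨hf.1.mono (prod_mono_left hS), fun t ht => hf.2 t (hS ht)⟩

lemma memX0W_of_subset_prod (hW : W ⊆ S ×ˢ ball 0 R) (hf : MemX0 S R f) : MemX0W W f :=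
  ⟨hf.1.mono hW, fun t _ hy => ((hf.2 t (hW hy).1).mono fun _ hz => (hW hz).2) _ hy⟩

lemma isHolomorphicFlow_characteristics (hm : IntegrableOn (fun τ => m τ / τ) (Ioc 0 T))
    (hbX : MemX0 (Ioc 0 T) R₀ b)
    (hb : ∀ t ∈ Ioc 0 T, ∀ x ∈ ball (0 : ℂ) R₀, ‖b t x‖ ≤ B * m t)
    (hgap : R₁ + B * wphi m T < R₀) (hΦT : ∀ x ∈ ball (0 : ℂ) R₁, Φ T T x = x)
    (hΦ : ∀ x ∈ ball (0 : ℂ) R₁, ∀ t ∈ Ioc 0 T, Φ t T x ∈ ball (0 : ℂ) R₀ ∧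
      HasDerivWithinAt (fun s => Φ s T x) (-(b t (Φ t T x)) / (t : ℂ)) (Ioc 0 T) t) :
    IsHolomorphicFlow T (ball 0 R₁) (ball 0 (R₁ + B * wphi m T))
      (fun s => B * (m s / s) / ((R₀ - (R₁ + B * wphi m T)) / 2)) (characteristicField b)
      (fun t x => Φ t T x) := by
  rw [wphi, ← integral_const_mul] at hgap ⊢
  refine isHolomorphicFlow_of_norm_field_le
    (hbX.1.neg.div (continuous_ofReal.comp continuous_fst).continuousOn
      fun p hp => ofReal_ne_zero.2 hp.1.1.ne')
    (fun s hs => (hbX.2 s hs).neg.div_const _) (hm.const_mul B) (fun s hs y hy => ?_) hgap hΦT hΦ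
  rw [characteristicField, norm_div, norm_neg, norm_real, Real.norm_of_nonneg hs.1.le,
    ← mul_div_assoc]
  exact div_le_div_of_nonneg_right (hb s hs y hy) hs.1.le

lemma forall_mem_Dchar {q : ℝ × ℂ → Prop} :
    (∀ p ∈ Dchar T R₁ Φ, q p) ↔ ∀ t ∈ Ioc 0 T, ∀ x ∈ ball (0 : ℂ) R₁, q (t, Φ t T x) := by
  refine ⟨fun h t ht x hx => h _ ⟨ht, x, hx, rfl⟩, ?_⟩
  rintro h ⟨t, y⟩ ⟨ht, x, hx, hy : y = Φ t T x⟩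
  exact hy ▸ h t ht x hx

end CharacteristicDomain

theorem statement6_general {T R₀ R₁ B a₀ M G μ : ℝ} {m : ℝ → ℝ} {lam b g : ℝ → ℂ → ℂ}
    {Φ : ℝ → ℝ → ℂ → ℂ} {ψ : ℂ → ℂ}
    (hm : IntegrableOn (fun τ => m τ / τ) (Ioc 0 T))
    (hlamX : MemX0 (Icc 0 T) R₀ lam) (hbX : MemX0 (Ioc 0 T) R₀ b)
    (hb : ∀ t ∈ Ioc 0 T, ∀ x ∈ ball (0 : ℂ) R₀, ‖b t x‖ ≤ B * m t)
    (hgap : R₁ + B * wphi m T < R₀) (hΦT : ∀ x ∈ ball (0 : ℂ) R₁, Φ T T x = x)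
    (hΦ : ∀ x ∈ ball (0 : ℂ) R₁, ∀ t ∈ Ioc 0 T, Φ t T x ∈ ball (0 : ℂ) R₀ ∧
      HasDerivWithinAt (fun s => Φ s T x) (-(b t (Φ t T x)) / (t : ℂ)) (Ioc 0 T) t)
    (hrelam : ∀ p ∈ Dchar T R₁ Φ, a₀ ≤ (lam p.1 p.2).re)
    (hψM : ∀ x ∈ ball (0 : ℂ) R₁, ‖ψ x‖ ≤ M)
    (hψ' : ∃ M' : ℝ, ∀ x ∈ ball (0 : ℂ) R₁, ‖deriv ψ x‖ ≤ M')
    (hgd : ∀ t, DifferentiableOn ℂ (g t) {y | (t, y) ∈ Dchar T R₁ Φ}) (hμa₀ : μ < a₀)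
    (hg : ∀ p ∈ Dchar T R₁ Φ, max ‖g p.1 p.2‖ ‖deriv (g p.1) p.2‖ ≤ G * p.1 ^ μ)
    {w : ℝ → ℂ → ℂ} (hw : MemX0W (Dchar T R₁ Φ) w) (hLw : SolvesLW (Dchar T R₁ Φ) lam b g w)
    (hwT : ∀ x ∈ ball (0 : ℂ) R₁, w T x = ψ x) :
    (∃ C > 0, ∀ p ∈ Dchar T R₁ Φ, max ‖w p.1 p.2‖ ‖deriv (w p.1) p.2‖ ≤ C * p.1 ^ μ) ∧
      ∀ p ∈ Dchar T R₁ Φ,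
        ‖w p.1 p.2‖ ≤ M * (p.1 / T) ^ a₀ + G / (a₀ - μ) * p.1 ^ μ := by
  have F := isHolomorphicFlow_characteristics hm hbX hb hgap hΦT hΦ
  have hW := forall_mem_Dchar (T := T) (R₁ := R₁) (Φ := Φ).1 fun _ hp => hp
  have hDchar : Dchar T R₁ Φ ⊆ Icc 0 T ×ˢ ball 0 (R₁ + B * wphi m T) :=
    forall_mem_Dchar.2 fun s hs x hx => ⟨Ioc_subset_Icc_self hs, F.mem_target s hs x hx⟩
  have hlam : MemX0W (Dchar T R₁ Φ) lam :=
    memX0W_of_subset_prod (hDchar.trans (prod_mono_right (ball_subset_ball hgap.le))) hlamX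
  obtain ⟨L, hL⟩ := exists_forall_norm_deriv_le isOpen_ball hlamX.1 hlamX.2 isCompact_Icc
    (isCompact_closedBall 0 _) (closedBall_subset_ball hgap)
  have hlam' (p : ℝ × ℂ) (hp : p ∈ Dchar T R₁ Φ) : ‖deriv (lam p.1) p.2‖ ≤ L :=
    hL p.1 (hDchar hp).1 p.2 (ball_subset_closedBall (hDchar hp).2)
  obtain ⟨M', hM'⟩ := hψ'
  have hwM (x : ℂ) (hx : x ∈ ball 0 R₁) : ‖w T x‖ ≤ M := hwT x hx ▸ hψM x hx
  have hwM' (x : ℂ) (hx : x ∈ ball 0 R₁) : ‖deriv (w T) x‖ ≤ M' :=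
    (EqOn.deriv hwT isOpen_ball hx).symm ▸ hM' x hx
  obtain ⟨C, hC, hbound⟩ := F.exists_norm_solution_le (convex_ball 0 R₁) hW hw hLw hlam hrelam
    hlam' hμa₀ hgd hg hwM hwM'
  exact ⟨⟨C, hC, forall_mem_Dchar.2 hbound⟩, forall_mem_Dchar.2 fun t ht x hx =>
    F.norm_solution_le hW hw hLw hlam.1 hrelam hμa₀ (fun p hp => le_of_max_le_left (hg p hp)) hwM
      ht hx⟩

/-- Corollary 4.3: in the setting of the characteristic domain `𝒟` for
`L = t∂/∂t - λ - b ∂/∂x`, if `0 < a₀ ≤ Re λ` on `𝒟`, `ψ` and `ψ'` are bounded on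
`D_{R₁}`, and `g ∈ X₁(𝒟)` with `max(|g|, |∂g/∂x|) ≤ G t^μ` for some `0 < μ < a₀`,
then the unique solution `w ∈ X₁(𝒟)` of `Lw = g`, `w(T,·) = ψ` satisfies
`max(|w|, |∂w/∂x|) ≤ C t^μ` on `𝒟`; in particular
`|w(t,x)| ≤ M (t/T)^{a₀} + (G/(a₀-μ)) t^μ` when `|ψ| ≤ M` and `|g| ≤ G t^μ`. -/
theorem statement6
    (T₀ R₀ : ℝ) (hT₀ : 0 < T₀) (hR₀ : 0 < R₀)
    (m : ℝ → ℝ) (hm : IsWeight T₀ m)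
    (lam b : ℝ → ℂ → ℂ)
    (hlamX : MemX0 (Set.Icc 0 T₀) R₀ lam) (hbX : MemX0 (Set.Icc 0 T₀) R₀ b)
    (B : ℝ) (hB : 0 < B)
    (hb : ∀ t ∈ Set.Ioc (0:ℝ) T₀, ∀ x ∈ Metric.ball (0:ℂ) R₀, ‖b t x‖ ≤ B * m t)
    (T R R₁ : ℝ) (hT : 0 < T) (hTT₀ : T < T₀)
    (hR : 0 < R) (hRR₁ : R < R₁) (hR₁R₀ : R₁ < R₀)
    (hgap1 : R + B * wphi m T < R₁) (hgap2 : R₁ + B * wphi m T < R₀)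
    -- `Φ t t₀ x₀` is the characteristic `φ(t; t₀, x₀)`, the unique solution of
    -- `dx/dt = -b(t,x)/t`, `x(t₀) = x₀` :
    (Φ : ℝ → ℝ → ℂ → ℂ)
    (hΦinit : ∀ t₀ ∈ Set.Ioc (0:ℝ) T, ∀ x₀ ∈ Metric.ball (0:ℂ) R₁, Φ t₀ t₀ x₀ = x₀)
    (hΦode : ∀ t₀ ∈ Set.Ioc (0:ℝ) T, ∀ x₀ ∈ Metric.ball (0:ℂ) R₁, ∀ t ∈ Set.Ioc (0:ℝ) T,
      Φ t t₀ x₀ ∈ Metric.ball (0:ℂ) R₀ ∧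
      HasDerivAt (fun s => Φ s t₀ x₀) (-(b t (Φ t t₀ x₀)) / (t:ℂ)) t)
    (hΦuniq : ∀ t₀ ∈ Set.Ioc (0:ℝ) T, ∀ x₀ ∈ Metric.ball (0:ℂ) R₁, ∀ y : ℝ → ℂ,
      y t₀ = x₀ →
      (∀ t ∈ Set.Ioc (0:ℝ) T, y t ∈ Metric.ball (0:ℂ) R₀ ∧
        HasDerivAt y (-(b t (y t)) / (t:ℂ)) t) →
      ∀ t ∈ Set.Ioc (0:ℝ) T, y t = Φ t t₀ x₀)
    (a₀ : ℝ) (ha₀ : 0 < a₀)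
    (hrelam : ∀ p ∈ Dchar T R₁ Φ, a₀ ≤ (lam p.1 p.2).re)
    (ψ : ℂ → ℂ) (hψ : DifferentiableOn ℂ ψ (Metric.ball (0:ℂ) R₁))
    (M : ℝ) (hψM : ∀ x ∈ Metric.ball (0:ℂ) R₁, ‖ψ x‖ ≤ M)
    (hψ' : ∃ M' : ℝ, ∀ x ∈ Metric.ball (0:ℂ) R₁, ‖deriv ψ x‖ ≤ M')
    (g : ℝ → ℂ → ℂ) (hgX : MemX1W (Dchar T R₁ Φ) g)
    (G μ : ℝ) (hG : 0 < G) (hμ : 0 < μ) (hμa₀ : μ < a₀)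
    (hg : ∀ p ∈ Dchar T R₁ Φ, max ‖g p.1 p.2‖ ‖deriv (g p.1) p.2‖ ≤ G * p.1 ^ μ) :
    ∀ w : ℝ → ℂ → ℂ, MemX1W (Dchar T R₁ Φ) w → SolvesLW (Dchar T R₁ Φ) lam b g w →
      (∀ x₀ ∈ Metric.ball (0:ℂ) R₁, w T x₀ = ψ x₀) →
      (∃ C > (0:ℝ), ∀ p ∈ Dchar T R₁ Φ,
        max ‖w p.1 p.2‖ ‖deriv (w p.1) p.2‖ ≤ C * p.1 ^ μ) ∧
      (∀ p ∈ Dchar T R₁ Φ,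
        ‖w p.1 p.2‖ ≤ M * (p.1 / T) ^ a₀ + (G / (a₀ - μ)) * p.1 ^ μ) := by
  have hIoc : Ioc 0 T ⊆ Ioc 0 T₀ := Ioc_subset_Ioc_right hTT₀.le
  exact fun w hw hLw hwT => statement6_general (hm.2.2.2.mono_set hIoc)
    (hlamX.mono (Icc_subset_Icc_right hTT₀.le)) (hbX.mono (hIoc.trans Ioc_subset_Icc_self))
    (fun t ht => hb t (hIoc ht)) hgap2 (hΦinit T ⟨hT, le_rfl⟩)
    (fun x hx t ht => (hΦode T ⟨hT, le_rfl⟩ x hx t ht).imp_right HasDerivAt.hasDerivWithinAt)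
    hrelam hψM hψ' hgX.1.2 hμa₀ hg hw.1 hLw hwT
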